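/- arXiv:2509.12576 — 2 statements merged into one kernel-verified Lean document; each statement's English description precedes it below -/
import Mathlib

section
/- Let R be an analytically unramified one-dimensional Cohen–Macaulay local ring with infinite residue field, and let J be a regular trace ideal of R. Then the integral closure \bar{J} is a reflexive trace ideal and tr_R(\bar{J}*) = \bar{J}. -/
open IsLocalRing

noncomputable def traceIdeal (R : Type*) [CommRing R] (M : Type*) [AddCommGroup M]
    [Module R M] : Ideal R :=
  ⨆ f : M →ₗ[R] R, LinearMap.range f

def IsCohenMacaulayLocalRing (R : Type*) [CommRing R] [IsLocalRing R] : Prop :=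
  ∃ rs : List R, (∀ r ∈ rs, r ∈ maximalIdeal R) ∧ RingTheory.Sequence.IsRegular R rs ∧
    ringKrullDim R = rs.length

noncomputable def moduleLength (R M : Type*) [CommRing R] [AddCommGroup M] [Module R M] :
    WithBot ℕ∞ :=
  Order.krullDim (Submodule R M)

noncomputable def conductorIdeal (R : Type*) [CommRing R] : Ideal R :=
  Submodule.colon (1 : Submodule R (FractionRing R))
    (Subalgebra.toSubmodule (integralClosure R (FractionRing R)))

def idealIntegralClosure {R : Type*} [CommRing R] (I : Ideal R) : Set R :=
  {x | ∃ n : ℕ, 0 < n ∧ ∃ a : ℕ → R, (∀ i ∈ Finset.Icc 1 n, a i ∈ I ^ i) ∧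
    x ^ n + ∑ i ∈ Finset.Icc 1 n, a i * x ^ (n - i) = 0}

def HasMinimalMultiplicity (R : Type*) [CommRing R] [IsLocalRing R] : Prop :=
  ∃ x : R, (x ∈ maximalIdeal R ∧
      ∃ n : ℕ, maximalIdeal R ^ (n + 1) = Ideal.span {x} * maximalIdeal R ^ n) ∧
    maximalIdeal R ^ 2 = Ideal.span {x} * maximalIdeal R

/-!
An element `z` is integral over `J` as soon as `z K ⊆ J K` for some finitely generated faithful
module `K`. Conversely there is a regular ideal `L` with `J̄ L ⊆ J L`. If `f : J̄ → R` is linear,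
then `f` maps `J` into `J` because `J` is a trace ideal, so for `w ∈ J̄` and `l ∈ L` one gets
`f(w) l = f(w l) ∈ f(J L) ⊆ J L`. Hence `f(w) ∈ J̄`, and `J̄` is a trace ideal.

For reflexivity put `I = J̄`, so that `I**` is `R : (R : I)` in the total fraction ring. Any `z` in
it satisfies `z (R : I ^ (m + 1)) ⊆ R : I ^ m`. In dimension one, `R : I ^ m = I (R : I ^ (m + 1))`
for some `m`: a power `I ^ s` contains an `x` with `u I ^ (m + s) ⊆ x I ^ m` for some `u ∈ 1 + I`.
To find `x`, take `y ∈ I` regular. A length count shows that two elements of the same degree of the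
Rees algebra `R[It]` are algebraically dependent modulo `y`, so that up to radical, modulo `y`,
they can be replaced by a single element; doing this for generators of `I t` leaves one element
`x t ^ s`. Thus `z D ⊆ I D` for `D = R : I ^ (m + 1)`, and `K = L D` shows that `z` is integral
over `J`.
-/

section Trace

variable {R M : Type*} [CommRing R] [AddCommGroup M] [Module R M]

theorem apply_mem_traceIdeal (f : M →ₗ[R] R) (m : M) : f m ∈ traceIdeal R M :=
  le_iSup (fun f : M →ₗ[R] R => LinearMap.range f) f ⟨m, rfl⟩

theorem traceIdeal_le_iff {I : Ideal R} :
    traceIdeal R M ≤ I ↔ ∀ (f : M →ₗ[R] R) (m : M), f m ∈ I :=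
  ⟨fun h f m => h (apply_mem_traceIdeal f m),
    fun h => iSup_le fun f => by rintro _ ⟨m, rfl⟩; exact h f m⟩

theorem le_traceIdeal_self (I : Ideal R) : I ≤ traceIdeal R I :=
  fun a ha => apply_mem_traceIdeal I.subtype ⟨a, ha⟩

theorem traceIdeal_dual [Module.IsReflexive R M] :
    traceIdeal R (Module.Dual R M) = traceIdeal R M := by
  refine le_antisymm (traceIdeal_le_iff.2 fun φ f => ?_)
    (traceIdeal_le_iff.2 fun f m => apply_mem_traceIdeal (Module.Dual.eval R M m) f)
  obtain ⟨m, rfl⟩ := (Module.bijective_dual_eval R M).surjective φ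
  exact apply_mem_traceIdeal f m

end Trace

section IntegralClosure

variable {R M : Type*} [CommRing R] [AddCommGroup M] [Module R M]

theorem mem_idealIntegralClosure_of_mem {J : Ideal R} {x : R} (hx : x ∈ J) :
    x ∈ idealIntegralClosure J := by
  refine ⟨1, one_pos, fun _ => -x, fun i hi => ?_, by simp⟩
  obtain rfl : i = 1 := by simpa using hi
  simpa using hx

theorem le_of_coe_eq_idealIntegralClosure {I J : Ideal R}
    (hI : (I : Set R) = idealIntegralClosure J) : J ≤ I :=
  fun _ ha => hI.ge (mem_idealIntegralClosure_of_mem ha)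

theorem mem_idealIntegralClosure_of_monic [Nontrivial R] {J : Ideal R} {z : R} {p : Polynomial R}
    (hp : p.Monic) (hcoeff : ∀ k, p.coeff k ∈ J ^ (p.natDegree - k)) (hz : p.eval z = 0) :
    z ∈ idealIntegralClosure J := by
  refine ⟨p.natDegree, Nat.pos_iff_ne_zero.2 fun hdeg => ?_,
    fun i => p.coeff (p.natDegree - i), fun i hi => ?_, ?_⟩
  · simp [hp.natDegree_eq_zero.1 hdeg] at hz
  · simpa [Nat.sub_sub_self (Finset.mem_Icc.1 hi).2] using hcoeff (p.natDegree - i)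
  · rw [Polynomial.eval_eq_sum_range, Finset.sum_range_succ, hp.coeff_natDegree, one_mul,
      add_comm] at hz
    rw [← hz]
    congr 1
    refine Finset.sum_nbij' (p.natDegree - ·) (p.natDegree - ·) ?_ ?_ ?_ ?_ fun _ _ => rfl
    all_goals
      intro i hi
      simp only [Finset.mem_Icc, Finset.mem_range] at hi ⊢
      omega

-- Cayley–Hamilton for multiplication by `z` on `K`.
theorem mem_idealIntegralClosure_of_smul_mem_smul {J : Ideal R} {z : R} {K : Submodule R M}
    (hfg : K.FG) (hfaithful : K.annihilator = ⊥) (hK : ∀ k ∈ K, z • k ∈ J • K) :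
    z ∈ idealIntegralClosure J := by
  cases subsingleton_or_nontrivial R
  · exact ⟨1, one_pos, 0, by simp, Subsingleton.elim _ _⟩
  have : Module.Finite R K := Module.Finite.iff_fg.2 hfg
  have hmap : (J • (⊤ : Submodule R K)).map K.subtype = J • K := by
    rw [Submodule.map_smul'', Submodule.map_top, Submodule.range_subtype]
  have hrange : LinearMap.range (algebraMap R (Module.End R K) z) ≤ J • ⊤ := by
    rintro _ ⟨k, rfl⟩
    obtain ⟨v, hv, hvk⟩ := hmap.ge (hK k k.2)
    obtain rfl : v = z • k := Subtype.ext hvk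
    exact hv
  obtain ⟨p, hp, -, hcoeff, hpz⟩ :=
    LinearMap.exists_monic_and_natDegree_eq_and_coeff_mem_pow_and_aeval_eq_zero R _ J hrange
  refine mem_idealIntegralClosure_of_monic hp hcoeff ?_
  rw [Polynomial.aeval_algebraMap_apply_eq_algebraMap_eval] at hpz
  rw [← Submodule.mem_bot R, ← hfaithful, Submodule.mem_annihilator]
  exact fun k hk => congrArg Subtype.val (LinearMap.congr_fun hpz ⟨k, hk⟩)

theorem exists_pow_succ_mem_mul_sup_pow {J : Ideal R} {z : R} (hz : z ∈ idealIntegralClosure J) :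
    ∃ n, z ^ (n + 1) ∈ J * (J ⊔ Ideal.span {z}) ^ n := by
  obtain ⟨_ | n, hn, a, ha, heq⟩ := hz
  · exact absurd hn (lt_irrefl 0)
  refine ⟨n, ?_⟩
  rw [eq_neg_of_add_eq_zero_left heq]
  refine neg_mem (Ideal.sum_mem _ fun i hi => ?_)
  obtain ⟨i, rfl⟩ := Nat.exists_eq_add_of_le' (Finset.mem_Icc.1 hi).1
  have hin : n = i + (n + 1 - (i + 1)) := by have := (Finset.mem_Icc.1 hi).2; omega
  have hle : J ^ (i + 1) * Ideal.span {z} ^ (n + 1 - (i + 1)) ≤ J * (J ⊔ Ideal.span {z}) ^ n := by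
    conv_rhs => rw [hin, pow_add, ← mul_assoc]
    rw [pow_succ']
    gcongr
    exacts [le_sup_left, le_sup_right]
  exact hle (Ideal.mul_mem_mul (ha _ hi) (Ideal.pow_mem_pow (Ideal.mem_span_singleton_self z) _))

theorem sup_pow_succ_le (A B : Ideal R) (n : ℕ) :
    (A ⊔ B) ^ (n + 1) ≤ A * (A ⊔ B) ^ n ⊔ B ^ (n + 1) := by
  induction n with
  | zero => simp
  | succ n ih =>
    calc (A ⊔ B) ^ (n + 2) = A * (A ⊔ B) ^ (n + 1) ⊔ B * (A ⊔ B) ^ (n + 1) := by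
          rw [pow_succ', Ideal.sup_mul]
      _ ≤ A * (A ⊔ B) ^ (n + 1) ⊔ B * (A * (A ⊔ B) ^ n ⊔ B ^ (n + 1)) := by gcongr
      _ ≤ A * (A ⊔ B) ^ (n + 1) ⊔ B ^ (n + 2) := by
          rw [Ideal.mul_sup, ← pow_succ', mul_left_comm, pow_succ']
          refine sup_le le_sup_left (sup_le (le_sup_of_le_left ?_) le_sup_right)
          gcongr
          exact le_sup_right

theorem exists_regular_span_mul_le_mul {J : Ideal R} (hreg : ∃ y ∈ J, y ∈ nonZeroDivisors R) {z : R}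
    (hz : z ∈ idealIntegralClosure J) :
    ∃ L : Ideal R, (∃ y ∈ L, y ∈ nonZeroDivisors R) ∧ Ideal.span {z} * L ≤ J * L := by
  obtain ⟨y, hyJ, hy⟩ := hreg
  obtain ⟨n, hn⟩ := exists_pow_succ_mem_mul_sup_pow hz
  refine ⟨(J ⊔ Ideal.span {z}) ^ n,
    ⟨y ^ n, Ideal.pow_mem_pow (Ideal.mem_sup_left hyJ) n, pow_mem hy n⟩, ?_⟩
  calc Ideal.span {z} * (J ⊔ Ideal.span {z}) ^ n ≤ (J ⊔ Ideal.span {z}) ^ (n + 1) := by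
        rw [pow_succ']; gcongr; exact le_sup_right
    _ ≤ J * (J ⊔ Ideal.span {z}) ^ n ⊔ Ideal.span {z} ^ (n + 1) := sup_pow_succ_le _ _ n
    _ ≤ J * (J ⊔ Ideal.span {z}) ^ n := by
        rw [Ideal.span_singleton_pow]
        exact sup_le le_rfl ((Ideal.span_singleton_le_iff_mem _).2 hn)

theorem exists_regular_mul_le_mul {I J : Ideal R} (hreg : ∃ y ∈ J, y ∈ nonZeroDivisors R)
    (hfg : I.FG) (hI : (I : Set R) ⊆ idealIntegralClosure J) :
    ∃ L : Ideal R, (∃ y ∈ L, y ∈ nonZeroDivisors R) ∧ I * L ≤ J * L := by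
  induction I, hfg using Submodule.fg_induction with
  | singleton z =>
    exact exists_regular_span_mul_le_mul hreg (hI (Ideal.mem_span_singleton_self z))
  | sup I₁ I₂ _ _ ih₁ ih₂ =>
    obtain ⟨L₁, ⟨y₁, hy₁L, hy₁⟩, h₁⟩ := ih₁ fun a ha => hI (Ideal.mem_sup_left ha)
    obtain ⟨L₂, ⟨y₂, hy₂L, hy₂⟩, h₂⟩ := ih₂ fun a ha => hI (Ideal.mem_sup_right ha)
    refine ⟨L₁ * L₂, ⟨y₁ * y₂, Ideal.mul_mem_mul hy₁L hy₂L, mul_mem hy₁ hy₂⟩, ?_⟩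
    rw [Ideal.sup_mul, ← mul_assoc, ← mul_assoc, mul_right_comm I₂, ← mul_assoc J]
    refine sup_le (Ideal.mul_mono_left h₁) ?_
    rw [mul_right_comm J]
    exact Ideal.mul_mono_left h₂

theorem annihilator_eq_bot_of_algebraMap_mem {A : Type*} [CommRing A] [Algebra R A]
    [FaithfulSMul R A] {K : Submodule R A} {y : R} (hy : y ∈ nonZeroDivisors R)
    (hyK : algebraMap R A y ∈ K) : K.annihilator = ⊥ := by
  refine (Submodule.eq_bot_iff _).2 fun r hr => ?_
  have hry : algebraMap R A (r * y) = 0 := by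
    rw [map_mul, ← Algebra.smul_def]
    exact Submodule.mem_annihilator.1 hr _ hyK
  exact (mul_right_mem_nonZeroDivisors_eq_zero_iff hy).1
    ((FaithfulSMul.algebraMap_eq_zero_iff R A).1 hry)

theorem traceIdeal_integralClosure [IsNoetherianRing R] {I J : Ideal R}
    (hreg : ∃ y ∈ J, y ∈ nonZeroDivisors R) (htr : traceIdeal R J = J)
    (hI : (I : Set R) = idealIntegralClosure J) : traceIdeal R I = I := by
  refine le_antisymm (traceIdeal_le_iff.2 fun f w => ?_) (le_traceIdeal_self I)
  have hJI := le_of_coe_eq_idealIntegralClosure hI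
  obtain ⟨L, ⟨y, hyL, hy⟩, hle⟩ :=
    exists_regular_mul_le_mul hreg (IsNoetherian.noetherian I) hI.subset
  have hfJL : J * L ≤ Submodule.map I.subtype (Submodule.comap f (J * L)) := by
    refine Ideal.mul_le.2 fun a ha l hl => ⟨l • ⟨a, hJI ha⟩, ?_, mul_comm l a⟩
    have hfa : f ⟨a, hJI ha⟩ ∈ J :=
      htr.le (apply_mem_traceIdeal (f ∘ₗ Submodule.inclusion hJI) ⟨a, ha⟩)
    rw [SetLike.mem_coe, Submodule.mem_comap, map_smul, smul_eq_mul]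
    exact Ideal.mul_mem_mul_rev hfa hl
  have hfw : ∀ l ∈ L, f w • l ∈ J • L := fun l hl => by
    obtain ⟨v, hv, hvw⟩ := hfJL (hle (Ideal.mul_mem_mul w.2 hl))
    obtain rfl : v = l • w := Subtype.ext (hvw.trans (mul_comm _ _))
    rw [SetLike.mem_coe, Submodule.mem_comap, map_smul, smul_eq_mul, mul_comm l] at hv
    exact hv
  rw [← SetLike.mem_coe, hI]
  exact mem_idealIntegralClosure_of_smul_mem_smul (IsNoetherian.noetherian L)
    (annihilator_eq_bot_of_algebraMap_mem hy hyL) hfw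

end IntegralClosure

section Length

theorem coheight_add_le_of_lt_succ {α : Type*} [Preorder α] {V : ℕ → α} {n : ℕ}
    (hV : ∀ j < n, V j < V (j + 1)) : Order.coheight (V n) + n ≤ Order.coheight (V 0) := by
  induction n with
  | zero => simp
  | succ n ih =>
    calc Order.coheight (V (n + 1)) + (n + 1 : ℕ)
        = Order.coheight (V (n + 1)) + 1 + n := by push_cast; ring
      _ ≤ Order.coheight (V n) + n := by
          gcongr
          exact Order.coheight_add_one_le (hV n n.lt_succ_self)
      _ ≤ Order.coheight (V 0) := ih fun j hj => hV j (hj.trans n.lt_succ_self)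

variable {R : Type*} [CommRing R]

open scoped Pointwise in
theorem coheight_span_singleton_mul {y : R} (hy : y ∈ nonZeroDivisors R) (K : Ideal R) :
    Order.coheight (Ideal.span {y} * K) = Order.coheight K + Ring.ord R y := by
  have hsmul : Ideal.span {y} * K = y • K := Submodule.span_singleton_mul
  rw [hsmul, ← Module.length_quotient, ← Module.length_quotient, Ring.ord]
  exact Module.length_eq_add_of_exact _ _ (Ideal.mulQuot_injective K hy)
    (Ideal.quotOfMul_surjective K) (Ideal.exact_mulQuot_quotOfMul K)

theorem coheight_ne_top [IsNoetherianRing R] [Ring.KrullDimLE 1 R] {K : Ideal R}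
    (hreg : ∃ y ∈ K, y ∈ nonZeroDivisors R) : Order.coheight K ≠ ⊤ := by
  obtain ⟨y, hyK, hy⟩ := hreg
  refine ne_top_of_le_ne_top (Ring.ord_ne_top hy) ?_
  rw [Ring.ord, Module.length_quotient]
  exact Order.coheight_anti ((Ideal.span_singleton_le_iff_mem K).2 hyK)

theorem exists_not_lt_succ_of_ord_lt [IsNoetherianRing R] [Ring.KrullDimLE 1 R] {K : Ideal R}
    {y : R} (hK : ∃ a ∈ K, a ∈ nonZeroDivisors R) (hy : y ∈ nonZeroDivisors R) {n : ℕ}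
    (hn : Ring.ord R y < n) {V : ℕ → Ideal R} (hV₀ : Ideal.span {y} * K ≤ V 0) (hVn : V n ≤ K) :
    ∃ j < n, ¬ V j < V (j + 1) := by
  by_contra! hlt
  refine ((ENat.add_lt_add_iff_left (coheight_ne_top hK)).2 hn).not_ge ?_
  calc Order.coheight K + n ≤ Order.coheight (V n) + n := by gcongr
    _ ≤ Order.coheight (V 0) := coheight_add_le_of_lt_succ hlt
    _ ≤ Order.coheight (Ideal.span {y} * K) := Order.coheight_anti hV₀
    _ = Order.coheight K + Ring.ord R y := coheight_span_singleton_mul hy K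

theorem exists_mul_pow_sub_mem_of_not_lt {x w : R} {T : Ideal R} {a e : ℕ}
    (h : ¬ Ideal.span {x} ^ (a + 1) * Ideal.span {x, w} ^ e ⊔ T <
      Ideal.span {x} ^ a * Ideal.span {x, w} ^ (e + 1) ⊔ T) :
    ∃ r ∈ Ideal.span {x, w} ^ e, x ^ a * (w ^ (e + 1) - x * r) ∈ T := by
  have hx : Ideal.span {x} ≤ Ideal.span {x, w} := Ideal.span_mono (by simp)
  have hle : Ideal.span {x} ^ (a + 1) * Ideal.span {x, w} ^ e ⊔ T ≤
      Ideal.span {x} ^ a * Ideal.span {x, w} ^ (e + 1) ⊔ T := by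
    rw [pow_succ, pow_succ', mul_assoc]
    gcongr
  have hmem : x ^ a * w ^ (e + 1) ∈ Ideal.span {x} ^ a * Ideal.span {x, w} ^ (e + 1) ⊔ T :=
    Ideal.mem_sup_left (Ideal.mul_mem_mul (Ideal.pow_mem_pow (Ideal.mem_span_singleton_self x) a)
      (Ideal.pow_mem_pow (Ideal.subset_span (by simp)) _))
  rw [← hle.eq_of_not_lt h, Ideal.span_singleton_pow] at hmem
  obtain ⟨_, hxr, t, ht, heq⟩ := Submodule.mem_sup.1 hmem
  obtain ⟨r, hr, rfl⟩ := Ideal.mem_span_singleton_mul.1 hxr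
  refine ⟨r, hr, ?_⟩
  rwa [show x ^ a * (w ^ (e + 1) - x * r) = t by linear_combination - heq]

-- The ideals `x ^ (n - j) (x, w) ^ j + y L ^ n` lie between `y L ^ n` and `L ^ n`, so for `n` large
-- two consecutive ones agree.
theorem exists_mul_pow_sub_mem_span_mul_pow [IsNoetherianRing R] [Ring.KrullDimLE 1 R] {L : Ideal R}
    {x w y : R} (hL : ∃ b ∈ L, b ∈ nonZeroDivisors R) (hy : y ∈ nonZeroDivisors R)
    (hx : x ∈ L) (hw : w ∈ L) :
    ∃ a e : ℕ, ∃ r ∈ L ^ e,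
      x ^ a * (w ^ (e + 1) - x * r) ∈ Ideal.span {y} * L ^ (a + (e + 1)) := by
  obtain ⟨N, hN⟩ := ENat.ne_top_iff_exists.1 (Ring.ord_ne_top hy)
  obtain ⟨b, hbL, hb⟩ := hL
  have hP : Ideal.span {x, w} ≤ L := Ideal.span_le.2 (Set.pair_subset hx hw)
  let V (j : ℕ) : Ideal R :=
    Ideal.span {x} ^ (N + 1 - j) * Ideal.span {x, w} ^ j ⊔ Ideal.span {y} * L ^ (N + 1)
  have hVn : V (N + 1) ≤ L ^ (N + 1) := by
    refine sup_le ?_ Ideal.mul_le_right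
    simpa using Ideal.pow_right_mono hP (N + 1)
  have hlt : Ring.ord R y < (N + 1 : ℕ) := by
    rw [← hN]
    exact_mod_cast N.lt_succ_self
  obtain ⟨j, hjN, hj⟩ := exists_not_lt_succ_of_ord_lt
    ⟨b ^ (N + 1), Ideal.pow_mem_pow hbL _, pow_mem hb _⟩ hy hlt (V := V) le_sup_right hVn
  obtain ⟨a, ha⟩ : ∃ a, N + 1 = a + (j + 1) := ⟨N - j, by omega⟩
  simp only [V, ha, Nat.add_sub_cancel, show a + (j + 1) - j = a + 1 by omega] at hj
  obtain ⟨r, hr, hmem⟩ := exists_mul_pow_sub_mem_of_not_lt hj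
  exact ⟨a, j, r, Ideal.pow_right_mono hP j hr, hmem⟩

end Length

section Reduction

variable {R : Type*} [CommRing R]

theorem mem_radical_span_of_pow_mul_mem {a b r t : R} {m d : ℕ} (hd : d ≠ 0)
    (h : a ^ m * (b ^ d - a * r) ∈ Ideal.span {t}) :
    a ∈ (Ideal.span {t, a ^ d + b ^ d - a * r}).radical ∧
      b ∈ (Ideal.span {t, a ^ d + b ^ d - a * r}).radical := by
  have key (P : Ideal R) (hP : P.IsPrime) (hle : Ideal.span {t, a ^ d + b ^ d - a * r} ≤ P) :
      a ∈ P ∧ b ∈ P := by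
    have ht : t ∈ P := hle (Ideal.subset_span (by simp))
    have hℓ : a ^ d + b ^ d - a * r ∈ P := hle (Ideal.subset_span (by simp))
    have ha : a ∈ P := by
      rcases hP.mem_or_mem ((Ideal.span_singleton_le_iff_mem P).2 ht h) with hm | hm
      · exact hP.mem_of_pow_mem m hm
      · refine hP.mem_of_pow_mem d ?_
        rw [show a ^ d = a ^ d + b ^ d - a * r - (b ^ d - a * r) by ring]
        exact P.sub_mem hℓ hm
    refine ⟨ha, hP.mem_of_pow_mem d ?_⟩
    rw [show b ^ d = a ^ d + b ^ d - a * r - a ^ d + a * r by ring]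
    exact P.add_mem (P.sub_mem hℓ (P.pow_mem_of_mem ha d hd.bot_lt)) (P.mul_mem_right r ha)
  simp only [Ideal.radical_eq_sInf, Ideal.mem_sInf]
  exact ⟨fun {P} hP => (key P hP.2 hP.1).1, fun {P} hP => (key P hP.2 hP.1).2⟩

variable {I : Ideal R}

/-- The degree `n` part `I ^ n t ^ n` of the Rees algebra `R[It]`. -/
noncomputable def reesComponent (I : Ideal R) (n : ℕ) : Submodule R (reesAlgebra I) :=
  (LinearMap.range (Polynomial.monomial n)).comap (reesAlgebra I).val.toLinearMap

theorem mem_reesComponent {n : ℕ} {α : reesAlgebra I} :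
    α ∈ reesComponent I n ↔ ∃ c ∈ I ^ n, (α : Polynomial R) = Polynomial.monomial n c := by
  refine ⟨?_, fun ⟨c, _, hα⟩ => ⟨c, hα.symm⟩⟩
  rintro ⟨c, hc⟩
  exact ⟨c, reesAlgebra.monomial_mem.1 (hc ▸ α.2), hc.symm⟩

theorem mul_mem_reesComponent {m n : ℕ} {α β : reesAlgebra I} (hα : α ∈ reesComponent I m)
    (hβ : β ∈ reesComponent I n) : α * β ∈ reesComponent I (m + n) := by
  obtain ⟨b, hb⟩ := hα
  obtain ⟨c, hc⟩ := hβ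
  exact ⟨b * c, by simp_all [← Polynomial.monomial_mul_monomial]⟩

theorem pow_mem_reesComponent {n : ℕ} {α : reesAlgebra I} (hα : α ∈ reesComponent I n) (k : ℕ) :
    α ^ k ∈ reesComponent I (n * k) := by
  obtain ⟨c, hc⟩ := hα
  exact ⟨c ^ k, by simp_all [← Polynomial.monomial_pow]⟩

theorem exists_mem_radical_span_pair [IsNoetherianRing R] [Ring.KrullDimLE 1 R] {y : R}
    (hyI : y ∈ I) (hy : y ∈ nonZeroDivisors R) {s : ℕ} {α β : reesAlgebra I}
    (hα : α ∈ reesComponent I s) (hβ : β ∈ reesComponent I s) :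
    ∃ d ≠ 0, ∃ γ ∈ reesComponent I (s * d),
      α ∈ (Ideal.span {algebraMap R _ y, γ}).radical ∧
        β ∈ (Ideal.span {algebraMap R _ y, γ}).radical := by
  obtain ⟨x, hx, hαx⟩ := mem_reesComponent.1 hα
  obtain ⟨w, hw, hβw⟩ := mem_reesComponent.1 hβ
  obtain ⟨a, e, r, hr, hmem⟩ := exists_mul_pow_sub_mem_span_mul_pow
    ⟨y ^ s, Ideal.pow_mem_pow hyI s, pow_mem hy s⟩ hy hx hw
  obtain ⟨k, hk, hyk⟩ := Ideal.mem_span_singleton_mul.1 hmem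
  rw [← pow_mul] at hr hk
  let ρ : reesAlgebra I := ⟨Polynomial.monomial (s * e) r, reesAlgebra.monomial_mem.2 hr⟩
  let κ : reesAlgebra I := ⟨Polynomial.monomial _ k, reesAlgebra.monomial_mem.2 hk⟩
  have hρ : ρ ∈ reesComponent I (s * e) := ⟨r, rfl⟩
  have hrel : α ^ a * (β ^ (e + 1) - α * ρ) = algebraMap R _ y * κ := by
    refine Subtype.ext ?_
    have hC := congrArg (Polynomial.C : R → Polynomial R) hyk
    simp only [map_mul, map_sub, map_pow] at hC
    simp only [MulMemClass.coe_mul, SubmonoidClass.coe_pow, AddSubgroupClass.coe_sub,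
      Subalgebra.coe_algebraMap, Polynomial.algebraMap_eq, hαx, hβw, ρ, κ,
      ← Polynomial.C_mul_X_pow_eq_monomial]
    linear_combination - Polynomial.X ^ (s * (a + (e + 1))) * hC
  refine ⟨e + 1, e.succ_ne_zero, α ^ (e + 1) + β ^ (e + 1) - α * ρ, ?_,
    mem_radical_span_of_pow_mul_mem e.succ_ne_zero
      (hrel ▸ Ideal.mul_mem_right κ _ (Ideal.mem_span_singleton_self _))⟩
  have hαρ : α * ρ ∈ reesComponent I (s * (e + 1)) := by
    rw [mul_add_one, add_comm]
    exact mul_mem_reesComponent hα hρ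
  exact sub_mem (add_mem (pow_mem_reesComponent hα _) (pow_mem_reesComponent hβ _)) hαρ

theorem exists_le_radical_span_pair [IsNoetherianRing R] [Ring.KrullDimLE 1 R] {y : R}
    (hyI : y ∈ I) (hy : y ∈ nonZeroDivisors R) {K : Submodule R (reesAlgebra I)} (hfg : K.FG)
    {n : ℕ} (hn : n ≠ 0) (hK : K ≤ reesComponent I n) :
    ∃ s ≠ 0, ∃ γ ∈ reesComponent I s,
      K ≤ (Ideal.span {algebraMap R _ y, γ}).radical.restrictScalars R := by
  induction K, hfg using Submodule.fg_induction with
  | singleton α =>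
    refine ⟨n, hn, α, hK (Submodule.mem_span_singleton_self α), ?_⟩
    rw [Submodule.span_singleton_le_iff_mem]
    exact Ideal.le_radical (Ideal.subset_span (by simp))
  | sup K₁ K₂ _ _ ih₁ ih₂ =>
    obtain ⟨s₁, hs₁, γ₁, hγ₁, hK₁⟩ := ih₁ (le_sup_left.trans hK)
    obtain ⟨s₂, hs₂, γ₂, hγ₂, hK₂⟩ := ih₂ (le_sup_right.trans hK)
    have hγ₂' : γ₂ ^ s₁ ∈ reesComponent I (s₁ * s₂) :=
      mul_comm s₁ s₂ ▸ pow_mem_reesComponent hγ₂ s₁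
    obtain ⟨d, hd, γ, hγ, hγ₁γ, hγ₂γ⟩ :=
      exists_mem_radical_span_pair hyI hy (pow_mem_reesComponent hγ₁ s₂) hγ₂'
    have hle (δ : reesAlgebra I) (k : ℕ)
        (hδ : δ ^ k ∈ (Ideal.span {algebraMap R _ y, γ}).radical) :
        (Ideal.span {algebraMap R _ y, δ}).radical ≤
          (Ideal.span {algebraMap R _ y, γ}).radical :=
      Ideal.radical_le_radical_iff.2 (Ideal.span_le.2 (Set.pair_subset
        (Ideal.le_radical (Ideal.subset_span (by simp)))
        (Ideal.radical_isRadical _ ⟨k, hδ⟩)))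
    exact ⟨s₁ * s₂ * d, by simp [*], γ, hγ,
      sup_le (hK₁.trans (hle _ _ hγ₁γ)) (hK₂.trans (hle _ _ hγ₂γ))⟩

theorem reesComponent_fg [IsNoetherianRing R] (I : Ideal R) (n : ℕ) : (reesComponent I n).FG := by
  refine Submodule.fg_of_fg_map_injective (reesAlgebra I).val.toLinearMap Subtype.val_injective ?_
  have hrange : (LinearMap.range (Polynomial.monomial (R := R) n)).FG := by
    rw [LinearMap.range_eq_map]
    exact Module.Finite.fg_top.map _
  exact hrange.of_le (Submodule.map_comap_le _ _)

theorem reesComponent_subset_span_pow (I : Ideal R) (n : ℕ) :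
    (reesComponent I n : Set (reesAlgebra I)) ⊆
      (Ideal.span (reesComponent I 1 : Set (reesAlgebra I)) ^ n : Ideal (reesAlgebra I)) := by
  set 𝔪 : Ideal (reesAlgebra I) := Ideal.span (reesComponent I 1 : Set (reesAlgebra I))
  have hle (n : ℕ) : I ^ n ≤ Submodule.comap (Polynomial.monomial n)
      (((𝔪 ^ n).restrictScalars R).map (reesAlgebra I).val.toLinearMap) := by
    induction n with
    | zero => exact fun c _ => ⟨algebraMap R _ c, by simp, rfl⟩
    | succ n ih =>
      rw [pow_succ, Ideal.mul_le]
      intro b hb a ha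
      obtain ⟨β, hβ, hβb⟩ := ih hb
      let α : reesAlgebra I :=
        ⟨Polynomial.monomial 1 a, reesAlgebra.monomial_mem.2 (by simpa using ha)⟩
      have hα : α ∈ 𝔪 := Ideal.subset_span ⟨a, rfl⟩
      refine ⟨β * α, pow_succ 𝔪 n ▸ Ideal.mul_mem_mul hβ hα, ?_⟩
      rw [← Polynomial.monomial_mul_monomial, ← hβb]
      rfl
  intro α hα
  obtain ⟨c, hc, hαc⟩ := mem_reesComponent.1 hα
  obtain ⟨β, hβ, hβc⟩ := hle n hc
  obtain rfl : β = α := Subtype.ext (hβc.trans hαc.symm)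
  exact hβ

theorem exists_pow_add_le_sup [IsNoetherianRing R] [Ring.KrullDimLE 1 R] {y : R}
    (hyI : y ∈ I) (hy : y ∈ nonZeroDivisors R) :
    ∃ m s, s ≠ 0 ∧ ∃ x ∈ I ^ s,
      I ^ (m + s) ≤ Ideal.span {x} * I ^ m ⊔ Ideal.span {y} * I ^ (m + s) := by
  obtain ⟨s, hs, γ, hγ, hle⟩ :=
    exists_le_radical_span_pair hyI hy (reesComponent_fg I 1) one_ne_zero le_rfl
  obtain ⟨x, hx, hγx⟩ := mem_reesComponent.1 hγ
  obtain ⟨m, hm⟩ := Ideal.exists_pow_le_of_le_radical_of_fg (Ideal.span_le.2 hle)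
    (IsNoetherian.noetherian (Ideal.span (reesComponent I 1 : Set (reesAlgebra I))))
  refine ⟨m, s, hs, x, hx, fun c hc => ?_⟩
  let α : reesAlgebra I := ⟨Polynomial.monomial (m + s) c, reesAlgebra.monomial_mem.2 hc⟩
  have hα : α ∈ Ideal.span {algebraMap R _ y, γ} :=
    hm (Ideal.pow_le_pow_right (Nat.le_add_right m s) (reesComponent_subset_span_pow I _ ⟨c, rfl⟩))
  obtain ⟨p, q, hpq⟩ := Ideal.mem_span_pair.1 hα
  have hcoeff : c = x * (q : Polynomial R).coeff m + y * (p : Polynomial R).coeff (m + s) := by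
    have := congrArg (fun δ : reesAlgebra I => (δ : Polynomial R).coeff (m + s)) hpq
    simp only [AddMemClass.coe_add, MulMemClass.coe_mul, SubalgebraClass.coe_algebraMap,
      Polynomial.algebraMap_eq, hγx, Polynomial.coeff_add, Polynomial.coeff_mul_C,
      Polynomial.coeff_mul_monomial, Polynomial.coeff_monomial_same, α] at this
    linear_combination - this
  rw [hcoeff]
  exact Submodule.add_mem_sup
    (Ideal.mul_mem_mul (Ideal.mem_span_singleton_self x) ((mem_reesAlgebra_iff I _).1 q.2 m))
    (Ideal.mul_mem_mul (Ideal.mem_span_singleton_self y) ((mem_reesAlgebra_iff I _).1 p.2 _))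

-- By Nakayama, `I ^ s` has the reduction `x` after inverting an element of `1 + I`.
theorem exists_mul_mem_span_mul_pow [IsNoetherianRing R] [Ring.KrullDimLE 1 R]
    (hreg : ∃ y ∈ I, y ∈ nonZeroDivisors R) :
    ∃ m s, s ≠ 0 ∧ ∃ x ∈ I ^ s, ∃ u, u - 1 ∈ I ∧
      ∀ c ∈ I ^ (m + s), u * c ∈ Ideal.span {x} * I ^ m := by
  obtain ⟨y, hyI, hy⟩ := hreg
  obtain ⟨m, s, hs, x, hx, hle⟩ := exists_pow_add_le_sup hyI hy
  obtain ⟨u, hu, hux⟩ := Submodule.exists_sub_one_mem_and_smul_le_of_fg_of_le_sup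
    (IsNoetherian.noetherian (I ^ (m + s))) le_rfl hle
  exact ⟨m, s, hs, x, hx, u, (Ideal.span_singleton_le_iff_mem I).2 hyI hu,
    fun c hc => hux (Submodule.smul_mem_pointwise_smul c u _ hc)⟩

end Reduction

section Reflexive

open IsLocalization

variable {R A : Type*} [CommRing R] [CommRing A] [Algebra R A]

theorem one_div_one_div_mul_one_div_mul_le (N P : Submodule R A) :
    1 / (1 / N) * (1 / (N * P)) ≤ 1 / P := by
  have hle : 1 / (N * P) * P ≤ 1 / N := by
    rw [Submodule.le_div_iff_mul_le, mul_assoc, mul_comm P, mul_comm]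
    exact Submodule.mul_one_div_le_one
  rw [Submodule.le_div_iff_mul_le, mul_assoc]
  calc 1 / (1 / N) * (1 / (N * P) * P) ≤ 1 / (1 / N) * (1 / N) := by gcongr
    _ ≤ 1 := by rw [mul_comm]; exact Submodule.mul_one_div_le_one

theorem mem_one_div_coeSubmodule {I : Ideal R} {q : A} :
    q ∈ 1 / coeSubmodule A I ↔ ∀ i ∈ I, i • q ∈ (1 : Submodule R A) := by
  simp [Submodule.mem_div_iff_forall_mul_mem, Algebra.smul_def, mul_comm]

theorem one_div_coeSubmodule_anti {I J : Ideal R} (h : I ≤ J) :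
    1 / coeSubmodule A J ≤ 1 / coeSubmodule A I := fun _ hq =>
  mem_one_div_coeSubmodule.2 fun i hi => mem_one_div_coeSubmodule.1 hq i (h hi)

theorem one_mem_one_div_coeSubmodule (I : Ideal R) : 1 ∈ 1 / coeSubmodule A I :=
  mem_one_div_coeSubmodule.2 fun i _ => Submodule.smul_mem _ i (Submodule.one_le.1 le_rfl)

theorem smul_one_div_coeSubmodule_mul_le (I J : Ideal R) :
    I • (1 / coeSubmodule A (I * J)) ≤ 1 / coeSubmodule A J :=
  Submodule.smul_le.2 fun i hi q hq => mem_one_div_coeSubmodule.2 fun j hj => by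
    rw [smul_smul, mul_comm]
    exact mem_one_div_coeSubmodule.1 hq _ (Ideal.mul_mem_mul hi hj)

theorem pow_smul_one_div_coeSubmodule_pow_le (I : Ideal R) (m k : ℕ) :
    I ^ (k + 1) • (1 / coeSubmodule A (I ^ (m + (k + 1)))) ≤
      I • (1 / coeSubmodule A (I ^ (m + 1))) := by
  rw [pow_succ', ← smul_eq_mul, Submodule.smul_assoc, show m + (k + 1) = k + (m + 1) by ring,
    pow_add]
  exact Submodule.smul_mono le_rfl (smul_one_div_coeSubmodule_mul_le _ _)

theorem smul_mul_mem_one_div_coeSubmodule {I J : Ideal R} {x u : R} {q c : A}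
    (hux : ∀ j ∈ J, u * j ∈ Ideal.span {x} * I) (hq : x • q = algebraMap R A u)
    (hc : c ∈ 1 / coeSubmodule A I) : u • (q * c) ∈ 1 / coeSubmodule A J := by
  refine mem_one_div_coeSubmodule.2 fun j hj => ?_
  obtain ⟨i, hi, hij⟩ := Ideal.mem_span_singleton_mul.1 (hux j hj)
  have hjc : j • u • (q * c) = u • i • c := by
    rw [smul_smul, mul_comm, ← hij, mul_smul, smul_comm x, ← smul_mul_assoc, hq,
      ← Algebra.smul_def, smul_comm]
  rw [hjc]
  exact Submodule.smul_mem _ u (mem_one_div_coeSubmodule.1 hc i hi)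

variable {Q : Type*} [CommRing Q] [Algebra R Q] [IsFractionRing R Q] {I : Ideal R}

theorem one_div_coeSubmodule_fg [IsNoetherianRing R] (hreg : ∃ y ∈ I, y ∈ nonZeroDivisors R) :
    (1 / coeSubmodule Q I).FG := by
  obtain ⟨y, hyI, hy⟩ := hreg
  refine (Submodule.fg_span_singleton (mk' Q (1 : R) ⟨y, hy⟩)).of_le fun q hq => ?_
  obtain ⟨r, hr⟩ := Submodule.mem_one.1 (mem_one_div_coeSubmodule.1 hq y hyI)
  refine Submodule.mem_span_singleton.2 ⟨r, ?_⟩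
  rw [smul_mk', mul_one, eq_comm, eq_mk'_iff_mul_eq, hr, Algebra.smul_def, mul_comm]

theorem exists_dual_of_mem_one_div {q : Q} (hq : q ∈ 1 / coeSubmodule Q I) :
    ∃ f : Module.Dual R I, ∀ i : I, algebraMap R Q (f i) = (i : R) • q := by
  let ι : R ≃ₗ[R] (1 : Submodule R Q) :=
    (LinearEquiv.ofInjective (Algebra.linearMap R Q) (IsFractionRing.injective R Q)).trans
      (LinearEquiv.ofEq _ _ Submodule.one_eq_range.symm)
  let g : I →ₗ[R] (1 : Submodule R Q) :=
    ((LinearMap.toSpanSingleton R Q q).domRestrict I).codRestrict 1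
      fun i => mem_one_div_coeSubmodule.1 hq i i.2
  exact ⟨ι.symm ∘ₗ g, fun i => congrArg Subtype.val (ι.apply_symm_apply (g i))⟩

theorem mul_dual_dual_apply (φ : Module.Dual R (Module.Dual R I)) (f : Module.Dual R I) (i : I) :
    i * φ f = f i * φ I.subtype := by
  have hf : (i : R) • f = f i • I.subtype := LinearMap.ext fun a => by
    have := congrArg f (show (i : R) • a = (a : R) • i from Subtype.ext (mul_comm _ _))
    simpa [mul_comm] using this
  simpa using congrArg φ hf

theorem isReflexive_of_one_div_one_div_le (hreg : ∃ y ∈ I, y ∈ nonZeroDivisors R)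
    (hI : 1 / (1 / coeSubmodule Q I) ≤ coeSubmodule Q I) : Module.IsReflexive R I := by
  obtain ⟨y, hyI, hy⟩ := hreg
  refine ⟨fun a b hab => Subtype.ext (LinearMap.congr_fun hab I.subtype), fun φ => ?_⟩
  have hφ : algebraMap R Q (φ I.subtype) ∈ 1 / (1 / coeSubmodule Q I) := by
    refine Submodule.mem_div_iff_forall_mul_mem.2 fun q hq => ?_
    obtain ⟨f, hf⟩ := exists_dual_of_mem_one_div hq
    refine Submodule.mem_one.2 ⟨φ f, (IsLocalization.map_units Q ⟨y, hy⟩).mul_left_cancel ?_⟩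
    have := congrArg (algebraMap R Q) (mul_dual_dual_apply φ f ⟨y, hyI⟩)
    rw [map_mul, map_mul, hf, Algebra.smul_def] at this
    rw [this]
    ring
  obtain ⟨z, hz, hzφ⟩ := (mem_coeSubmodule Q I).1 (hI hφ)
  obtain rfl : z = φ I.subtype := IsFractionRing.injective R Q hzφ
  refine ⟨⟨_, hz⟩, LinearMap.ext fun f => (mul_cancel_left_mem_nonZeroDivisors hy).1 ?_⟩
  have h₁ := mul_dual_dual_apply φ f ⟨y, hyI⟩
  have h₂ := mul_dual_dual_apply (Module.Dual.eval R I ⟨_, hz⟩) f ⟨y, hyI⟩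
  exact h₂.trans h₁.symm

theorem exists_one_div_pow_le_smul [IsNoetherianRing R] [Ring.KrullDimLE 1 R]
    (hreg : ∃ y ∈ I, y ∈ nonZeroDivisors R) :
    ∃ m, 1 / coeSubmodule Q (I ^ m) ≤ I • (1 / coeSubmodule Q (I ^ (m + 1))) := by
  obtain ⟨m, s, hs, x, hx, u, hu, hux⟩ := exists_mul_mem_span_mul_pow hreg
  obtain ⟨k, rfl⟩ := Nat.exists_eq_succ_of_ne_zero hs
  obtain ⟨y, hyI, hy⟩ := hreg
  refine ⟨m, fun c hc => ?_⟩
  obtain ⟨q, hq⟩ : ∃ q : Q, x • q = algebraMap R Q u := by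
    obtain ⟨v, -, hv⟩ := Ideal.mem_span_singleton_mul.1 (hux _ (Ideal.pow_mem_pow hyI _))
    refine ⟨mk' Q v ⟨y ^ (m + (k + 1)), pow_mem hy _⟩, ?_⟩
    rw [smul_mk', eq_comm, eq_mk'_iff_mul_eq, hv, map_mul]
  have hc' : c ∈ 1 / coeSubmodule Q (I ^ (m + 1)) :=
    one_div_coeSubmodule_anti (Ideal.pow_le_pow_right m.le_succ) hc
  have hdecomp : c = x • u • (q * c) + ((1 - u) * (1 + u)) • c := by
    rw [smul_comm, ← smul_mul_assoc, hq, ← Algebra.smul_def]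
    module
  have hu' : (1 - u) * (1 + u) ∈ I := I.mul_mem_right _ (neg_sub u 1 ▸ neg_mem hu)
  rw [hdecomp]
  exact add_mem
    (pow_smul_one_div_coeSubmodule_pow_le I m k
      (Submodule.smul_mem_smul hx (smul_mul_mem_one_div_coeSubmodule hux hq hc)))
    (Submodule.smul_mem_smul hu' hc')

theorem one_div_one_div_le_of_integralClosure [IsNoetherianRing R] [Ring.KrullDimLE 1 R]
    {J : Ideal R} (hreg : ∃ y ∈ J, y ∈ nonZeroDivisors R)
    (hI : (I : Set R) = idealIntegralClosure J) :
    1 / (1 / coeSubmodule Q I) ≤ coeSubmodule Q I := by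
  obtain ⟨L, ⟨y, hyL, hy⟩, hL⟩ :=
    exists_regular_mul_le_mul hreg (IsNoetherian.noetherian I) hI.subset
  have hregI := hreg.imp fun _ => And.imp_left (le_of_coe_eq_idealIntegralClosure hI ·)
  obtain ⟨m, hm⟩ := exists_one_div_pow_le_smul (Q := Q) hregI
  set D := 1 / coeSubmodule Q (I ^ (m + 1)) with hD
  intro q hq
  obtain ⟨z, rfl⟩ : ∃ z, algebraMap R Q z = q := by
    simpa using Submodule.mem_div_iff_forall_mul_mem.1 hq 1 (one_mem_one_div_coeSubmodule I)
  have hzD (d : Q) (hd : d ∈ D) : z • d ∈ I • D := hm <| by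
    rw [hD, pow_succ', coeSubmodule_mul] at hd
    rw [Algebra.smul_def]
    exact one_div_one_div_mul_one_div_mul_le _ _ (Submodule.mul_mem_mul hq hd)
  have hLIJ : L • I • D ≤ J • L • D := by
    rw [← Submodule.mul_smul, ← Submodule.mul_smul, mul_comm L]
    exact Submodule.smul_mono hL le_rfl
  have hzLD : L • D ≤ (J • L • D).comap (LinearMap.lsmul R Q z) :=
    Submodule.smul_le.2 fun l hl d hd => hLIJ <| by
      rw [LinearMap.lsmul_apply, smul_comm z l d]
      exact Submodule.smul_mem_smul hl (hzD d hd)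
  have hfg : (L • D).FG := by
    obtain ⟨b, hbI, hb⟩ := hregI
    exact (one_div_coeSubmodule_fg ⟨b ^ (m + 1), Ideal.pow_mem_pow hbI _, pow_mem hb _⟩).of_le
      Submodule.smul_le_right
  have hyLD : algebraMap R Q y ∈ L • D := by
    rw [Algebra.algebraMap_eq_smul_one]
    exact Submodule.smul_mem_smul hyL (one_mem_one_div_coeSubmodule _)
  have hz : z ∈ idealIntegralClosure J :=
    mem_idealIntegralClosure_of_smul_mem_smul hfg
      (annihilator_eq_bot_of_algebraMap_mem hy hyLD) hzLD
  exact (mem_coeSubmodule Q I).2 ⟨z, hI.ge hz, rfl⟩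

end Reflexive

theorem integralClosure_of_trace_reflexive_trace_general
    (R : Type*) [CommRing R] [IsNoetherianRing R] [Ring.KrullDimLE 1 R]
    (J : Ideal R) (hreg : ∃ x ∈ J, x ∈ nonZeroDivisors R)
    (htr : traceIdeal R ↥J = J)
    (Jbar : Ideal R) (hJbar : (Jbar : Set R) = idealIntegralClosure J) :
    Module.IsReflexive R ↥Jbar ∧ traceIdeal R ↥Jbar = Jbar ∧
      traceIdeal R (Module.Dual R ↥Jbar) = Jbar := by
  have hregJbar := hreg.imp fun _ => And.imp_left (le_of_coe_eq_idealIntegralClosure hJbar ·)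
  have hrefl : Module.IsReflexive R Jbar := isReflexive_of_one_div_one_div_le hregJbar
    (one_div_one_div_le_of_integralClosure (Q := FractionRing R) hreg hJbar)
  have htrace : traceIdeal R Jbar = Jbar := traceIdeal_integralClosure hreg htr hJbar
  exact ⟨hrefl, htrace, traceIdeal_dual.trans htrace⟩

/-- Let `R` be an analytically unramified one-dimensional Cohen–Macaulay
local ring with infinite residue field, and let `J` be a regular trace ideal of `R`. Then the
integral closure `J̄` is a reflexive trace ideal and `tr_R(J̄*) = J̄`. -/
theorem integralClosure_of_trace_reflexive_trace
    (R : Type*) [CommRing R] [IsNoetherianRing R] [IsLocalRing R]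
    (hur : IsReduced (AdicCompletion (maximalIdeal R) R))
    (hdim : ringKrullDim R = 1) (hCM : IsCohenMacaulayLocalRing R)
    (hk : Infinite (ResidueField R))
    (J : Ideal R) (hreg : ∃ x ∈ J, x ∈ nonZeroDivisors R)
    (htr : traceIdeal R ↥J = J)
    (Jbar : Ideal R) (hJbar : (Jbar : Set R) = idealIntegralClosure J) :
    Module.IsReflexive R ↥Jbar ∧ traceIdeal R ↥Jbar = Jbar ∧
      traceIdeal R (Module.Dual R ↥Jbar) = Jbar := by
  have : Ring.KrullDimLE 1 R := Ring.krullDimLE_iff.2 hdim.le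
  exact integralClosure_of_trace_reflexive_trace_general R J hreg htr Jbar hJbar
end

section
/- Let R be an analytically unramified one-dimensional non-regular Cohen–Macaulay local ring with infinite residue field and conductor C = R : \bar{R}. If length(R/C) ≤ 3, then every proper regular trace ideal of R is reflexive. -/
open IsLocalRing

/-!
Let `A` be the integral closure of `R` in its total fraction ring `K`, `C = R : A` the conductor,
and `J** = R : (R : J)`, all colons being taken in `K`. Since `R / C` is Artinian, `C` contains a
non-zero-divisor, so `A` is finite over `R` and `J A` is an invertible ideal of `A`. Invertibility
gives `C ⊆ J`, as `J` is a trace ideal, and `J** ⊆ J A`.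

If `J ≠ J**`, then `C ⊆ J ⊊ J** ⊊ R`, and `length (R / C) ≤ 3` leaves room for at most one step
between `C` and `J`, so `J = C + R w`. But then an element of `J** ⊆ J A` has the form `c + a w`
with `c ∈ C`, `a ∈ A` and `a w ∈ R`. So `a J ⊆ C + R a w ⊆ R`, and since `J` is a trace ideal,
`a w ∈ J`: a contradiction.
-/

open IsLocalization (coeSubmodule)

section Length

variable {R M : Type*} [CommRing R] [AddCommGroup M] [Module R M]

theorem length_le_moduleLength_quotient {N : Submodule R M} (s : LTSeries (Submodule R M))
    (hs : N ≤ s.head) : (s.length : WithBot ℕ∞) ≤ moduleLength R (M ⧸ N) := by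
  let t : LTSeries (Set.Ici N) :=
    { length := s.length
      toFun := fun i => ⟨s i, hs.trans (LTSeries.head_le s i)⟩
      step := s.step }
  calc (s.length : WithBot ℕ∞) ≤ Order.krullDim (Set.Ici N) := Order.LTSeries.length_le_krullDim t
    _ = moduleLength R (M ⧸ N) := (Order.krullDim_eq_of_orderIso N.comapMkQRelIso).symm

theorem exists_eq_sup_span_singleton_of_lt_of_lt {C I I' I'' : Submodule R M}
    (hlen : moduleLength R (M ⧸ C) ≤ 3) (hCI : C ≤ I) (hI : I < I') (hI' : I' < I'') :
    ∃ w, I = C ⊔ Submodule.span R {w} := by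
  by_contra! hne
  obtain ⟨w, hwI, hwC⟩ := SetLike.exists_of_lt (hCI.lt_of_ne fun h => hne 0 (by simp [h]))
  have hCw : C < C ⊔ Submodule.span R {w} := by simpa using hwC
  have hwI' : C ⊔ Submodule.span R {w} < I :=
    (sup_le hCI (by simpa using hwI)).lt_of_ne (hne w).symm
  let s : LTSeries (Submodule R M) :=
    ⟨4, ![C, C ⊔ Submodule.span R {w}, I, I', I''], by
      intro i; fin_cases i; exacts [hCw, hwI', hI, hI']⟩
  have h43 : ((4 : ℕ) : WithBot ℕ∞) ≤ (3 : ℕ) :=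
    (length_le_moduleLength_quotient s le_rfl).trans hlen
  exact absurd (Nat.cast_le.1 h43) (by decide)

theorem isArtinian_of_moduleLength_lt_top (h : moduleLength R M < ⊤) : IsArtinian R M := by
  have hfin : IsFiniteLength R M := by
    rw [← Module.length_ne_top_iff]
    intro htop
    rw [moduleLength, ← Module.coe_length, htop] at h
    exact lt_irrefl _ h
  exact (isFiniteLength_iff_isNoetherian_isArtinian.1 hfin).2

end Length

section Artinian

theorem exists_notMem_forall_mem_pow_mul_eq_zero {S : Type*} [CommRing S] [IsArtinianRing S]
    {P : Ideal S} (hP : P ≠ ⊤) : ∃ s ∉ P, ∃ n : ℕ, ∀ t ∈ P ^ n, s * t = 0 := by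
  obtain ⟨n, hn⟩ := IsArtinian.monotone_stabilizes ⟨(P ^ ·), @Ideal.pow_le_pow_right _ _ P⟩
  have hstab : P ^ n ≤ P • P ^ n := by
    rw [smul_eq_mul, ← pow_succ']
    exact (hn (n + 1) n.le_succ).ge
  obtain ⟨s, hs1, hs⟩ := Submodule.exists_sub_one_mem_and_smul_eq_zero_of_fg_of_le_smul P (P ^ n)
    (P ^ n).fg_of_isNoetherianRing hstab
  refine ⟨s, fun hsP => hP ((Ideal.eq_top_iff_one P).2 ?_), n, hs⟩
  simpa using sub_mem hsP hs1

theorem exists_notMem_forall_mem_pow_mul_mem {R : Type*} [CommRing R] {C P : Ideal R}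
    [IsArtinianRing (R ⧸ C)] (hCP : C ≤ P) (hP : P ≠ ⊤) :
    ∃ s ∉ P, ∃ n : ℕ, ∀ t ∈ P ^ n, s * t ∈ C := by
  have hmk : Function.Surjective (Ideal.Quotient.mk C) := Ideal.Quotient.mk_surjective
  have hcomap : (P.map (Ideal.Quotient.mk C)).comap (Ideal.Quotient.mk C) = P :=
    Ideal.comap_map_mk hCP
  obtain ⟨s, hs, n, hn⟩ := exists_notMem_forall_mem_pow_mul_eq_zero
    (P := P.map (Ideal.Quotient.mk C)) fun h => hP (by rw [← hcomap, h, Ideal.comap_top])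
  obtain ⟨s, rfl⟩ := hmk s
  refine ⟨s, fun hsP => hs (Ideal.mem_map_of_mem _ hsP), n, fun t ht => ?_⟩
  rw [← Ideal.Quotient.eq_zero_iff_mem, map_mul]
  exact hn _ (Ideal.map_pow (Ideal.Quotient.mk C) P n ▸ Ideal.mem_map_of_mem _ ht)

theorem isMaximal_of_isPrime_of_isArtinianRing_quotient {R : Type*} [CommRing R] {C P : Ideal R}
    [IsArtinianRing (R ⧸ C)] [P.IsPrime] (hCP : C ≤ P) : P.IsMaximal := by
  have hprime : (P.map (Ideal.Quotient.mk C)).IsPrime :=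
    Ideal.map_isPrime_of_surjective Ideal.Quotient.mk_surjective (by simpa using hCP)
  have := IsArtinianRing.isMaximal_of_isPrime (P.map (Ideal.Quotient.mk C))
  rw [← Ideal.comap_map_mk hCP]
  exact Ideal.comap_isMaximal_of_surjective _ Ideal.Quotient.mk_surjective

theorem exists_not_dvd_forall_dvd_mul {S : Type*} [CommRing S] {x : S}
    [IsArtinianRing (S ⧸ Ideal.span {x})] {H : Ideal S} (hxH : x ∈ H) (hH : H ≠ ⊤) :
    ∃ b : S, ¬ x ∣ b ∧ ∀ h ∈ H, x ∣ b * h := by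
  have hspan : Ideal.span {x} ≤ H := (Ideal.span_singleton_le_iff_mem H).2 hxH
  let π := Ideal.Quotient.mk (Ideal.span {x})
  have hπ : ∀ s, π s = 0 ↔ x ∣ s := fun s => by
    rw [Ideal.Quotient.eq_zero_iff_mem, Ideal.mem_span_singleton]
  have hHmap : H.map π ≠ ⊤ := fun h => hH (by
    rw [← Ideal.comap_map_mk hspan, h, Ideal.comap_top])
  have hdisj : Disjoint (H.map π : Set (S ⧸ Ideal.span {x}))
      (nonZeroDivisors (S ⧸ Ideal.span {x})) :=
    Set.disjoint_left.2 fun a ha ha0 => hHmap (Ideal.eq_top_of_isUnit_mem _ ha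
      (IsArtinianRing.isUnit_of_mem_nonZeroDivisors ha0))
  obtain ⟨b, hb, hb0⟩ :=
    SetLike.exists_of_lt (Ideal.bot_lt_annihilator_of_disjoint_nonZeroDivisors hdisj)
  obtain ⟨b, rfl⟩ := Ideal.Quotient.mk_surjective b
  refine ⟨b, fun h => hb0 ((hπ b).2 h), fun h hh => ?_⟩
  rw [← hπ, map_mul]
  exact Submodule.mem_annihilator.1 hb _ (Ideal.mem_map_of_mem π hh)

theorem isArtinianRing_quotient_span_singleton {R : Type*} [CommRing R] [IsNoetherianRing R]
    [Ring.KrullDimLE 1 R] {x : R} (hx : x ∈ nonZeroDivisors R) :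
    IsArtinianRing (R ⧸ Ideal.span {x}) :=
  isArtinian_of_tower R
    (isFiniteLength_iff_isNoetherian_isArtinian.1 (isFiniteLength_quotient_span_singleton R hx)).2

theorem isArtinianRing_quotient_span_algebraMap {R : Type*} (S : Type*) [CommRing R]
    [IsNoetherianRing R] [Ring.KrullDimLE 1 R] [CommRing S] [Algebra R S] [Module.Finite R S]
    {x : R} (hx : x ∈ nonZeroDivisors R) :
    IsArtinianRing (S ⧸ Ideal.span {algebraMap R S x}) := by
  have := isArtinianRing_quotient_span_singleton hx
  have hmap : (Ideal.span {x}).map (algebraMap R S) = Ideal.span {algebraMap R S x} := by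
    rw [Ideal.map_span, Set.image_singleton]
  rw [← hmap]
  have : Module.Finite (R ⧸ Ideal.span {x}) (S ⧸ (Ideal.span {x}).map (algebraMap R S)) :=
    Module.Finite.of_restrictScalars_finite R _ _
  exact IsArtinianRing.of_finite (R ⧸ Ideal.span {x}) _

end Artinian

section Colon

variable {R K : Type*} [CommRing R] [CommRing K] [Algebra R K]

theorem fg_of_forall_mul_mem_one [IsNoetherianRing R] {N : Submodule R K} {u : K} (hu : IsUnit u)
    (h : ∀ n ∈ N, u * n ∈ (1 : Submodule R K)) : N.FG := by
  obtain ⟨u, rfl⟩ := hu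
  refine (Submodule.fg_span_singleton ((u⁻¹ : Kˣ) : K)).of_le fun n hn => ?_
  obtain ⟨r, hr⟩ := Submodule.mem_one.1 (h n hn)
  exact Submodule.mem_span_singleton.2
    ⟨r, by rw [Algebra.smul_def, hr, mul_comm, Units.inv_mul_cancel_left]⟩

theorem div_self_le_integralClosure [IsNoetherianRing R] {N : Submodule R K} {u v : K}
    (hu : IsUnit u) (huN : u ∈ N) (hv : IsUnit v) (hvN : ∀ n ∈ N, v * n ∈ (1 : Submodule R K)) :
    N / N ≤ Subalgebra.toSubmodule (integralClosure R K) := by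
  have hfg : (N / N).FG := fg_of_forall_mul_mem_one (hv.mul hu) fun f hf => by
    rw [mul_assoc, mul_comm u]
    exact hvN _ (hf u huN)
  let B : Subalgebra R K := (N / N).toSubalgebra (Submodule.one_mem_div.2 le_rfl)
    fun f g hf hg n hn => by
      rw [mul_assoc]
      exact hf _ (hg n hn)
  exact fun f hf => IsIntegral.of_mem_of_fg B hfg f hf

theorem submodule_div_mul_le (M N : Submodule R K) : M / N * N ≤ M :=
  Submodule.le_div_iff_mul_le.1 le_rfl

theorem one_div_one_div_le_one {N : Submodule R K} (hN : N ≤ 1) : 1 / (1 / N) ≤ 1 := by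
  intro z hz
  simpa using hz 1 (Submodule.one_le.1 (Submodule.one_le_one_div.2 hN))

theorem le_one_div_one_div (N : Submodule R K) : N ≤ 1 / (1 / N) :=
  Submodule.le_div_iff_mul_le.2 Submodule.mul_one_div_le_one

section Subalgebra

variable (B : Subalgebra R K)

theorem one_div_toSubmodule_le_one : 1 / Subalgebra.toSubmodule B ≤ 1 := fun y hy => by
  simpa using hy 1 (one_mem B)

theorem one_div_toSubmodule_mul_self_le :
    1 / Subalgebra.toSubmodule B * Subalgebra.toSubmodule B ≤ 1 / Subalgebra.toSubmodule B := by
  rw [Submodule.le_div_iff_mul_le, mul_assoc, B.isIdempotentElem_toSubmodule]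
  exact submodule_div_mul_le _ _

theorem one_div_toSubmodule_mul_div_le (N : Submodule R K) :
    1 / Subalgebra.toSubmodule B * (Subalgebra.toSubmodule B / N) ≤ 1 / N := by
  rw [Submodule.le_div_iff_mul_le, mul_assoc]
  exact (mul_le_mul_right (submodule_div_mul_le _ _) _).trans (submodule_div_mul_le _ _)

variable {B} {N : Submodule R K}

theorem one_div_toSubmodule_le_of_one_mem_div_mul (hinv : 1 ∈ Subalgebra.toSubmodule B / N * N)
    (htr : 1 / N * N ≤ N) : 1 / Subalgebra.toSubmodule B ≤ N :=
  calc 1 / Subalgebra.toSubmodule B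
      ≤ 1 / Subalgebra.toSubmodule B * (Subalgebra.toSubmodule B / N * N) :=
        le_mul_of_one_le_right' (Submodule.one_le.2 hinv)
    _ = 1 / Subalgebra.toSubmodule B * (Subalgebra.toSubmodule B / N) * N := (mul_assoc _ _ _).symm
    _ ≤ 1 / N * N := by gcongr; exact one_div_toSubmodule_mul_div_le B N
    _ ≤ N := htr

theorem one_div_one_div_le_toSubmodule_mul (hinv : 1 ∈ Subalgebra.toSubmodule B / N * N)
    (hB : (1 / Subalgebra.toSubmodule B) / (1 / Subalgebra.toSubmodule B) ≤
      Subalgebra.toSubmodule B) :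
    1 / (1 / N) ≤ Subalgebra.toSubmodule B * N := by
  set A := Subalgebra.toSubmodule B
  have hbidual : 1 / (1 / N) * (A / N) ≤ A := by
    refine le_trans ?_ hB
    rw [Submodule.le_div_iff_mul_le, Submodule.le_div_iff_mul_le]
    calc 1 / (1 / N) * (A / N) * (1 / A) * A
        = 1 / (1 / N) * (1 / A * A * (A / N)) := by ring
      _ ≤ 1 / (1 / N) * (1 / A * (A / N)) := by
        gcongr; exact one_div_toSubmodule_mul_self_le B
      _ ≤ 1 / (1 / N) * (1 / N) := by gcongr; exact one_div_toSubmodule_mul_div_le B N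
      _ ≤ 1 := submodule_div_mul_le _ _
  calc 1 / (1 / N) ≤ 1 / (1 / N) * (A / N * N) :=
        le_mul_of_one_le_right' (Submodule.one_le.2 hinv)
    _ = 1 / (1 / N) * (A / N) * N := (mul_assoc _ _ _).symm
    _ ≤ A * N := by gcongr

theorem one_div_one_div_le_of_eq_sup_span {w : K}
    (hN : N = 1 / Subalgebra.toSubmodule B ⊔ Submodule.span R {w}) (hN1 : N ≤ 1)
    (htr : 1 / N * N ≤ N) (hbidual : 1 / (1 / N) ≤ Subalgebra.toSubmodule B * N) :
    1 / (1 / N) ≤ N := by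
  set A := Subalgebra.toSubmodule B
  have hAC : A * (1 / A) ≤ 1 / A := mul_comm A (1 / A) ▸ one_div_toSubmodule_mul_self_le B
  have hCN : 1 / A ≤ N := hN ▸ le_sup_left
  have hwN : w ∈ N := hN ▸ Submodule.mem_sup_right (Submodule.mem_span_singleton_self w)
  intro z hz
  have hz' : z ∈ A * (1 / A) ⊔ A * Submodule.span R {w} := by
    rw [← Submodule.mul_sup, ← hN]
    exact hbidual hz
  obtain ⟨c, hc, aw, haw, rfl⟩ := Submodule.mem_sup.1 hz'
  obtain ⟨a, ha, rfl⟩ := Submodule.mem_mul_span_singleton.1 haw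
  have haw1 : a * w ∈ (1 : Submodule R K) := by
    simpa using sub_mem (one_div_one_div_le_one hN1 hz) (hN1 (hCN (hAC hc)))
  have haN : a ∈ 1 / N := by
    rw [← Submodule.span_singleton_le_iff_mem, Submodule.le_div_iff_mul_le, hN, Submodule.mul_sup]
    refine sup_le ?_ (by simpa [Submodule.span_mul_span] using haw1)
    calc Submodule.span R {a} * (1 / A) ≤ A * (1 / A) := by
          gcongr; exact (Submodule.span_singleton_le_iff_mem a A).2 ha
      _ ≤ 1 := hAC.trans (one_div_toSubmodule_le_one B)
  exact add_mem (hCN (hAC hc)) (htr (Submodule.mul_mem_mul haN hwN))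

end Subalgebra

end Colon

section Invertible

variable {S K : Type*} [CommRing S] [CommRing K] [Algebra S K]

theorem coeSubmodule_le_one (I : Ideal S) : coeSubmodule K I ≤ 1 :=
  IsLocalization.coeSubmodule_top (R := S) K ▸ IsLocalization.coeSubmodule_mono K le_top

theorem eq_top_of_one_div_coeSubmodule_le_one [FaithfulSMul S K] {H : Ideal S} {x : S}
    [IsArtinianRing (S ⧸ Ideal.span {x})] (hxH : x ∈ H) (hx : IsUnit (algebraMap S K x))
    (h : 1 / coeSubmodule K H ≤ 1) : H = ⊤ := by
  by_contra hH
  obtain ⟨b, hb, hbH⟩ := exists_not_dvd_forall_dvd_mul hxH hH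
  obtain ⟨u, hu⟩ := hx
  have hbx : (u⁻¹ : Kˣ) * algebraMap S K b ∈ 1 / coeSubmodule K H := by
    rintro _ ⟨y, hy, rfl⟩
    obtain ⟨s, hs⟩ := hbH y hy
    refine Submodule.mem_one.2 ⟨s, ?_⟩
    rw [Algebra.linearMap_apply, mul_assoc, ← map_mul, hs, map_mul, ← hu,
      Units.inv_mul_cancel_left]
  obtain ⟨s, hs⟩ := Submodule.mem_one.1 (h hbx)
  refine hb ⟨s, FaithfulSMul.algebraMap_injective S K ?_⟩
  rw [map_mul, hs, ← hu, Units.mul_inv_cancel_left]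

theorem one_mem_one_div_mul_of_isIntegrallyClosedIn [IsNoetherianRing S] [IsIntegrallyClosedIn S K]
    {I : Ideal S} {x : S} [IsArtinianRing (S ⧸ Ideal.span {x})] (hxI : x ∈ I)
    (hx : IsUnit (algebraMap S K x)) :
    1 ∈ 1 / coeSubmodule K I * coeSubmodule K I := by
  have : FaithfulSMul S K := (faithfulSMul_iff_algebraMap_injective S K).2
    (IsIntegralClosure.algebraMap_injective S S K)
  set N := 1 / coeSubmodule K I
  have h1N : 1 ∈ N := Submodule.one_mem_div.2 (coeSubmodule_le_one I)
  have hxI' : algebraMap S K x ∈ coeSubmodule K I := ⟨x, hxI, rfl⟩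
  let H : Ideal S := (N * coeSubmodule K I).comap (Algebra.linearMap S K)
  have hH : coeSubmodule K H = N * coeSubmodule K I :=
    Submodule.map_comap_eq_of_le (by
      rw [← Submodule.one_eq_range]; exact submodule_div_mul_le _ _)
  have hxH : x ∈ H := by
    change algebraMap S K x ∈ N * coeSubmodule K I
    simpa only [one_mul] using Submodule.mul_mem_mul h1N hxI'
  have hNN : N / N ≤ 1 := fun f hf => by
    have hint : IsIntegral S f := div_self_le_integralClosure isUnit_one h1N hx
      (fun n hn => by rw [mul_comm]; exact hn _ hxI') hf
    exact Submodule.mem_one.2 (IsIntegrallyClosedIn.isIntegral_iff.1 hint)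
  have hHtop : H = ⊤ := by
    refine eq_top_of_one_div_coeSubmodule_le_one hxH hx (le_trans ?_ hNN)
    rw [hH, Submodule.le_div_iff_mul_le, Submodule.le_div_iff_mul_le, mul_assoc]
    exact submodule_div_mul_le _ _
  rw [← hH, hHtop, IsLocalization.coeSubmodule_top]
  exact Submodule.one_le.1 le_rfl

end Invertible

section IntegralClosure

variable {R K : Type*} [CommRing R] [CommRing K] [Algebra R K]

theorem one_mem_toSubmodule_div_mul_of_map {B : Subalgebra R K} {J : Ideal R}
    (h : 1 ∈ 1 / coeSubmodule K (J.map (algebraMap R B)) *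
      coeSubmodule K (J.map (algebraMap R B))) :
    1 ∈ Subalgebra.toSubmodule B / coeSubmodule K J * coeSubmodule K J := by
  set I := coeSubmodule K (J.map (algebraMap R B)) with hI
  have hmul : ∀ i ∈ I, ∀ g ∈ 1 / I,
      g * i ∈ Subalgebra.toSubmodule B / coeSubmodule K J * coeSubmodule K J := by
    intro i hi
    rw [hI, Ideal.map, IsLocalization.coeSubmodule_span] at hi
    induction hi using Submodule.span_induction with
    | zero => simp
    | add i i' _ _ ih ih' => exact fun g hg => mul_add g i i' ▸ add_mem (ih g hg) (ih' g hg)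
    | smul b i _ ih =>
      intro g hg
      rw [mul_smul_comm, ← smul_mul_assoc]
      exact ih _ (Submodule.smul_mem _ b hg)
    | mem _ hi =>
      obtain ⟨_, ⟨y, hy, rfl⟩, rfl⟩ := hi
      intro g hg
      refine Submodule.mul_mem_mul ?_ ⟨y, hy, rfl⟩
      rintro _ ⟨z, hz, rfl⟩
      obtain ⟨b, hb⟩ := Submodule.mem_one.1
        (hg (algebraMap R K z) ⟨algebraMap R B z, Ideal.mem_map_of_mem _ hz, rfl⟩)
      exact hb ▸ b.2
  refine Submodule.mul_induction_on h (fun g hg i hi => hmul i hi g hg) fun _ _ => add_mem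

theorem one_mem_integralClosure_div_mul [IsNoetherianRing R] [Ring.KrullDimLE 1 R]
    [IsFractionRing R K] [Module.Finite R (integralClosure R K)] {J : Ideal R} {x : R}
    (hxJ : x ∈ J) (hx : x ∈ nonZeroDivisors R) :
    1 ∈ Subalgebra.toSubmodule (integralClosure R K) / coeSubmodule K J * coeSubmodule K J := by
  have := isNoetherian_of_isNoetherianRing_of_finite R (integralClosure R K)
  have : IsNoetherianRing (integralClosure R K) := isNoetherian_of_tower R this
  have := isArtinianRing_quotient_span_algebraMap (integralClosure R K) hx
  exact one_mem_toSubmodule_div_mul_of_map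
    (one_mem_one_div_mul_of_isIntegrallyClosedIn (Ideal.mem_map_of_mem _ hxJ)
      (IsLocalization.map_units K (⟨x, hx⟩ : nonZeroDivisors R)))

end IntegralClosure

section Dual

variable {R : Type*} (K : Type*) [CommRing R] [CommRing K] [Algebra R K]

theorem exists_linearMap_of_mem_one_div [FaithfulSMul R K] {J : Ideal R} {d : K}
    (hd : d ∈ 1 / coeSubmodule K J) :
    ∃ g : J →ₗ[R] R, ∀ y : J, algebraMap R K (g y) = d * algebraMap R K y := by
  have hinj : Function.Injective (algebraMap R K) := FaithfulSMul.algebraMap_injective R K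
  have hex : ∀ y : J, ∃ r : R, algebraMap R K r = d * algebraMap R K y := fun y =>
    Submodule.mem_one.1 (hd _ ⟨y, y.2, rfl⟩)
  choose g hg using hex
  exact ⟨{ toFun := g
           map_add' := fun a b => hinj (by simp [hg, mul_add])
           map_smul' := fun r a => hinj (by simp [hg, mul_left_comm]) }, hg⟩

theorem one_div_mul_le_coeSubmodule_traceIdeal [FaithfulSMul R K] (J : Ideal R) :
    1 / coeSubmodule K J * coeSubmodule K J ≤ coeSubmodule K (traceIdeal R J) := by
  rw [Submodule.mul_le]
  rintro d hd _ ⟨y, hy, rfl⟩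
  obtain ⟨g, hg⟩ := exists_linearMap_of_mem_one_div K hd
  exact ⟨g ⟨y, hy⟩, Submodule.mem_iSup_of_mem g ⟨_, rfl⟩, hg ⟨y, hy⟩⟩

/-- The reflexive hull `R : (R : J)` of an ideal `J`, with colons taken in `K`; here it is
intersected with `R`, which changes nothing when `J` is an ideal of `R ⊆ K`. -/
noncomputable def reflexiveHull (J : Ideal R) : Ideal R :=
  (1 / (1 / coeSubmodule K J)).comap (Algebra.linearMap R K)

theorem le_reflexiveHull (J : Ideal R) : J ≤ reflexiveHull K J := fun y hy =>
  le_one_div_one_div _ ⟨y, hy, rfl⟩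

theorem reflexiveHull_ne_top [FaithfulSMul R K] {J : Ideal R} {x : R}
    [IsArtinianRing (R ⧸ Ideal.span {x})] (hxJ : x ∈ J) (hx : IsUnit (algebraMap R K x))
    (hJ : J ≠ ⊤) : reflexiveHull K J ≠ ⊤ := by
  refine fun htop => hJ (eq_top_of_one_div_coeSubmodule_le_one hxJ hx fun d hd => ?_)
  have h1 : (1 : R) ∈ reflexiveHull K J := htop ▸ Submodule.mem_top
  simpa using h1 d hd

theorem ideal_mul_apply_comm {J : Ideal R} (g : J →ₗ[R] R) (a b : J) : (a : R) * g b = b * g a := by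
  simp_rw [← smul_eq_mul, ← map_smul]
  congr 1
  ext
  simp [mul_comm]

theorem ideal_mul_bidual_apply {J : Ideal R} (φ : Module.Dual R (Module.Dual R J))
    (g : J →ₗ[R] R) (a : J) : (a : R) * φ g = g a * φ J.subtype := by
  simp_rw [← smul_eq_mul, ← map_smul]
  congr 1
  ext b
  simp [ideal_mul_apply_comm g a b, mul_comm]

theorem isReflexive_of_reflexiveHull_le [IsFractionRing R K] {J : Ideal R} {x : R} (hxJ : x ∈ J)
    (hx : x ∈ nonZeroDivisors R) (h : reflexiveHull K J ≤ J) : Module.IsReflexive R J := by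
  have hxK : IsUnit (algebraMap R K x) :=
    IsLocalization.map_units K (⟨x, hx⟩ : nonZeroDivisors R)
  refine ⟨fun a b hab => Subtype.ext (LinearMap.congr_fun hab J.subtype), fun φ => ?_⟩
  have hφJ : φ J.subtype ∈ J := h fun d hd => by
    obtain ⟨g, hg⟩ := exists_linearMap_of_mem_one_div K hd
    refine Submodule.mem_one.2 ⟨φ g, hxK.mul_left_cancel ?_⟩
    rw [← map_mul, ideal_mul_bidual_apply φ g ⟨x, hxJ⟩, map_mul, hg, Algebra.linearMap_apply]
    ring
  refine ⟨⟨φ J.subtype, hφJ⟩, LinearMap.ext fun g => ?_⟩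
  refine (mul_cancel_left_mem_nonZeroDivisors hx).1 ?_
  rw [ideal_mul_bidual_apply φ g ⟨x, hxJ⟩, Module.Dual.eval_apply, mul_comm (g _)]
  exact ideal_mul_apply_comm g ⟨x, hxJ⟩ ⟨φ J.subtype, hφJ⟩

end Dual

section Conductor

variable {R : Type*} [CommRing R]

theorem coeSubmodule_conductorIdeal :
    coeSubmodule (FractionRing R) (conductorIdeal R) =
      1 / Subalgebra.toSubmodule (integralClosure R (FractionRing R)) := by
  have hcomap : conductorIdeal R =
      (1 / Subalgebra.toSubmodule (integralClosure R (FractionRing R))).comap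
        (Algebra.linearMap R (FractionRing R)) := by
    ext r
    simp [conductorIdeal, Submodule.mem_colon, Submodule.mem_div_iff_forall_mul_mem,
      Algebra.smul_def]
  rw [hcomap]
  refine Submodule.map_comap_eq_of_le ?_
  rw [← Submodule.one_eq_range]
  exact one_div_toSubmodule_le_one _

/-- If `C ⊆ P`, then `P` is maximal and some `s ∉ P` satisfies `s Pⁿ ⊆ C`. A fraction `a` integral
over `R` has a denominator `t ∉ P`, so `s a` is multiplied into `R` by the comaximal ideals `(t)`
and `Pⁿ`; hence `s ∈ C`, a contradiction. -/
theorem not_conductorIdeal_le_of_disjoint_nonZeroDivisors [IsArtinianRing (R ⧸ conductorIdeal R)]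
    {P : Ideal R} [P.IsPrime] (hP : Disjoint (P : Set R) (nonZeroDivisors R)) :
    ¬ conductorIdeal R ≤ P := by
  intro hCP
  have hmax : P.IsMaximal := isMaximal_of_isPrime_of_isArtinianRing_quotient hCP
  obtain ⟨s, hsP, n, hs⟩ := exists_notMem_forall_mem_pow_mul_mem hCP hmax.ne_top
  refine hsP (hCP (Submodule.mem_colon.2 fun a ha => ?_))
  obtain ⟨t, ht⟩ := IsLocalization.exists_integer_multiple (nonZeroDivisors R) a
  let D : Ideal R := (1 : Submodule R (FractionRing R)).colon {s • a}
  have htD : Ideal.span {(t : R)} ≤ D := by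
    rw [Ideal.span_singleton_le_iff_mem, Submodule.mem_colon_singleton, smul_comm]
    exact Submodule.smul_mem _ s (Submodule.mem_one.2 ht)
  have hPD : P ^ n ≤ D := fun p hp => by
    rw [Submodule.mem_colon_singleton, smul_smul, mul_comm]
    exact Submodule.mem_colon.1 (hs p hp) a ha
  have htP : (t : R) ∉ P := fun htP => Set.disjoint_left.1 hP htP t.2
  have hcoprime : Ideal.span {(t : R)} ⊔ P ^ n = ⊤ :=
    Ideal.sup_pow_eq_top (sup_comm P _ ▸ hmax.1.2 _ (by simpa using htP))
  have h1 : (1 : R) ∈ D := by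
    rw [(top_le_iff.1 (hcoprime ▸ sup_le htD hPD) : D = ⊤)]
    trivial
  simpa [D, Submodule.mem_colon] using h1

theorem exists_mem_conductorIdeal_mem_nonZeroDivisors [IsNoetherianRing R]
    [IsArtinianRing (R ⧸ conductorIdeal R)] :
    ∃ c ∈ conductorIdeal R, c ∈ nonZeroDivisors R := by
  by_contra! h
  obtain ⟨P, hP, hCP⟩ : ∃ P ∈ associatedPrimes R R, conductorIdeal R ≤ P :=
    ((conductorIdeal R).subset_union_prime_finite (associatedPrimes.finite R R) (f := id) 0 0
      fun _ h _ _ => h.1).1 (biUnion_associatedPrimes_eq_compl_nonZeroDivisors R ▸ h)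
  have := hP.1
  refine not_conductorIdeal_le_of_disjoint_nonZeroDivisors (Set.disjoint_left.2 fun t ht => ?_) hCP
  exact (biUnion_associatedPrimes_eq_compl_nonZeroDivisors R).subset (Set.mem_biUnion hP ht)

theorem finite_integralClosure_of_mem_conductorIdeal [IsNoetherianRing R] {c : R}
    (hcC : c ∈ conductorIdeal R) (hc : c ∈ nonZeroDivisors R) :
    Module.Finite R (integralClosure R (FractionRing R)) := by
  refine Module.Finite.iff_fg.2 (fg_of_forall_mul_mem_one
    (N := Subalgebra.toSubmodule (integralClosure R (FractionRing R)))
    (IsLocalization.map_units (FractionRing R) (⟨c, hc⟩ : nonZeroDivisors R)) fun a ha => ?_)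
  rw [← Algebra.smul_def]
  exact Submodule.mem_colon.1 hcC a ha

theorem one_div_div_one_div_integralClosure_le [IsNoetherianRing R] {c : R}
    (hcC : c ∈ conductorIdeal R) (hc : c ∈ nonZeroDivisors R) :
    (1 / Subalgebra.toSubmodule (integralClosure R (FractionRing R))) /
        (1 / Subalgebra.toSubmodule (integralClosure R (FractionRing R))) ≤
      Subalgebra.toSubmodule (integralClosure R (FractionRing R)) := by
  refine div_self_le_integralClosure (IsLocalization.map_units _ (⟨c, hc⟩ : nonZeroDivisors R))
    (coeSubmodule_conductorIdeal (R := R) ▸ ⟨c, hcC, rfl⟩) isUnit_one fun y hy => ?_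
  simpa using one_div_toSubmodule_le_one _ hy

variable {J : Ideal R} {c x : R}

theorem conductorIdeal_le_of_traceIdeal_eq [IsNoetherianRing R] [Ring.KrullDimLE 1 R]
    (hcC : c ∈ conductorIdeal R) (hc : c ∈ nonZeroDivisors R) (hxJ : x ∈ J)
    (hx : x ∈ nonZeroDivisors R) (htr : traceIdeal R J = J) : conductorIdeal R ≤ J := by
  have := finite_integralClosure_of_mem_conductorIdeal hcC hc
  have hmul := one_div_mul_le_coeSubmodule_traceIdeal (FractionRing R) J
  rw [htr] at hmul
  rw [← IsFractionRing.coeSubmodule_le_coeSubmodule (K := FractionRing R),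
    coeSubmodule_conductorIdeal]
  exact one_div_toSubmodule_le_of_one_mem_div_mul (one_mem_integralClosure_div_mul hxJ hx) hmul

theorem isReflexive_of_eq_conductorIdeal_sup_span [IsNoetherianRing R] [Ring.KrullDimLE 1 R]
    (hcC : c ∈ conductorIdeal R) (hc : c ∈ nonZeroDivisors R) (htr : traceIdeal R J = J) {w : R}
    (hJ : J = conductorIdeal R ⊔ Ideal.span {w}) : Module.IsReflexive R J := by
  have := finite_integralClosure_of_mem_conductorIdeal hcC hc
  have hcJ : c ∈ J := hJ ▸ Submodule.mem_sup_left hcC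
  have hmul := one_div_mul_le_coeSubmodule_traceIdeal (FractionRing R) J
  rw [htr] at hmul
  have hbidual := one_div_one_div_le_toSubmodule_mul (one_mem_integralClosure_div_mul hcJ hc)
    (one_div_div_one_div_integralClosure_le hcC hc)
  have hJK : coeSubmodule (FractionRing R) J =
      1 / Subalgebra.toSubmodule (integralClosure R (FractionRing R)) ⊔
        Submodule.span R {algebraMap R (FractionRing R) w} := by
    rw [hJ, IsLocalization.coeSubmodule_sup, coeSubmodule_conductorIdeal,
      IsLocalization.coeSubmodule_span_singleton]
  have hle := one_div_one_div_le_of_eq_sup_span hJK (coeSubmodule_le_one J) hmul hbidual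
  refine isReflexive_of_reflexiveHull_le (FractionRing R) hcJ hc fun z hz => ?_
  obtain ⟨y, hy, hyz⟩ := hle hz
  exact IsFractionRing.injective R (FractionRing R) hyz ▸ hy

end Conductor

theorem trace_reflexive_of_colength_le_three_general
    (R : Type*) [CommRing R] [IsNoetherianRing R] [Ring.KrullDimLE 1 R]
    (hlen : moduleLength R (R ⧸ conductorIdeal R) ≤ 3)
    (J : Ideal R) (hreg : ∃ x ∈ J, x ∈ nonZeroDivisors R) (htr : traceIdeal R ↥J = J) :
    Module.IsReflexive R ↥J := by
  have := isArtinian_of_moduleLength_lt_top (hlen.trans_lt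
    (WithBot.coe_lt_coe.2 (ENat.natCast_lt_top 3)))
  have : IsArtinianRing (R ⧸ conductorIdeal R) := isArtinian_of_tower R this
  obtain ⟨c, hcC, hc⟩ := exists_mem_conductorIdeal_mem_nonZeroDivisors (R := R)
  obtain ⟨x, hxJ, hx⟩ := hreg
  by_contra hrefl
  have hnle : ¬ reflexiveHull (FractionRing R) J ≤ J := fun h =>
    hrefl (isReflexive_of_reflexiveHull_le (FractionRing R) hxJ hx h)
  have hJ : J ≠ ⊤ := fun h => hnle (h ▸ le_top)
  have := isArtinianRing_quotient_span_singleton hx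
  have hhull : reflexiveHull (FractionRing R) J ≠ ⊤ := reflexiveHull_ne_top _ hxJ
    (IsLocalization.map_units _ (⟨x, hx⟩ : nonZeroDivisors R)) hJ
  obtain ⟨w, hw⟩ := exists_eq_sup_span_singleton_of_lt_of_lt hlen
    (conductorIdeal_le_of_traceIdeal_eq hcC hc hxJ hx htr)
    ((le_reflexiveHull _ J).lt_of_not_ge hnle) hhull.lt_top
  exact hrefl (isReflexive_of_eq_conductorIdeal_sup_span hcC hc htr hw)

/-- Let `R` be an analytically unramified one-dimensional non-regular
Cohen–Macaulay local ring with infinite residue field and conductor `C = R : R̄`. If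
`length(R/C) ≤ 3`, then every proper regular trace ideal of `R` is reflexive. -/
theorem trace_reflexive_of_colength_le_three
    (R : Type*) [CommRing R] [IsNoetherianRing R] [IsLocalRing R]
    (hur : IsReduced (AdicCompletion (maximalIdeal R) R))
    (hdim : ringKrullDim R = 1) (hCM : IsCohenMacaulayLocalRing R)
    (hnonreg : ¬ (maximalIdeal R).IsPrincipal) (hk : Infinite (ResidueField R))
    (hlen : moduleLength R (R ⧸ conductorIdeal R) ≤ 3)
    (J : Ideal R) (hproper : J ≠ ⊤) (hreg : ∃ x ∈ J, x ∈ nonZeroDivisors R)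
    (htr : traceIdeal R ↥J = J) :
    Module.IsReflexive R ↥J := by
  have : Ring.KrullDimLE 1 R := Ring.krullDimLE_iff.2 hdim.le
  exact trace_reflexive_of_colength_le_three_general R hlen J hreg htr
end
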